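/- arXiv:0711.1006 — 4 statements merged into one kernel-verified Lean document; each statement's English description precedes it below -/
import Mathlib

section
/- The real line equipped with the half-open (lower limit) topology, i.e., the topology generated by the half-open intervals [a,b), is a Baire space. -/
/-- The half-open (lower limit) topology on `ℝ`, generated by the intervals `[a, b)`. -/
def halfOpenTopology : TopologicalSpace ℝ :=
  TopologicalSpace.generateFrom {I : Set ℝ | ∃ a b : ℝ, I = Set.Ico a b}

/-!
The lower limit topology refines the order topology, but each nonempty `[a, b)` still contains
the nonempty order-open set `(a, b)`. Hence the order interior of a set that is open and dense
for the lower limit topology is dense for the order topology. The intersection of countably many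
such interiors is therefore order-dense, so it meets the order interior of every nonempty set
that is open for the lower limit topology.
-/

open Set Topology TopologicalSpace

section ContinuousInjection

variable {X Y : Type*} [TopologicalSpace X] [TopologicalSpace Y] {f : X → Y}

theorem dense_interior_image_of_nonempty_interior_image (hcont : Continuous f)
    (hrange : DenseRange f) (hint : ∀ U, IsOpen U → U.Nonempty → (interior (f '' U)).Nonempty)
    {U : Set X} (hU : IsOpen U) (hdense : Dense U) : Dense (interior (f '' U)) := by
  refine dense_iff_inter_open.2 fun W hW hne ↦ ?_
  have hpre : IsOpen (f ⁻¹' W) := hW.preimage hcont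
  have hpre_ne : (f ⁻¹' W).Nonempty := hrange.exists_mem_open hW hne
  have himage : (interior (f '' (f ⁻¹' W ∩ U))).Nonempty :=
    hint _ (hpre.inter hU) (hdense.inter_open_nonempty _ hpre hpre_ne)
  rwa [image_preimage_inter, interior_inter, hW.interior_eq] at himage

theorem baireSpace_of_nonempty_interior_image [BaireSpace Y] (hcont : Continuous f)
    (hinj : f.Injective) (hrange : DenseRange f)
    (hint : ∀ U, IsOpen U → U.Nonempty → (interior (f '' U)).Nonempty) : BaireSpace X := by
  refine ⟨fun U hU hdense ↦ dense_iff_inter_open.2 fun V hV hne ↦ ?_⟩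
  have hdense_int : Dense (⋂ n, interior (f '' U n)) :=
    dense_iInter_of_isOpen_nat (fun _ ↦ isOpen_interior) fun n ↦
      dense_interior_image_of_nonempty_interior_image hcont hrange hint (hU n) (hdense n)
  obtain ⟨y, hyV, hyU⟩ := hdense_int.inter_open_nonempty _ isOpen_interior (hint V hV hne)
  obtain ⟨x, hxV, rfl⟩ := interior_subset hyV
  refine ⟨x, hxV, mem_iInter.2 fun n ↦ ?_⟩
  exact hinj.mem_set_image.1 (interior_subset (mem_iInter.1 hyU n))

end ContinuousInjection

/-- The lower limit topology on an ordered type, generated by the intervals `[a, b)`. For `ℝ` it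
is definitionally `halfOpenTopology`. -/
abbrev lowerLimitTopology (α : Type*) [Preorder α] : TopologicalSpace α :=
  generateFrom {I : Set α | ∃ a b : α, I = Ico a b}

section LowerLimit

variable {α : Type*} [LinearOrder α] [NoMaxOrder α]

theorem isTopologicalBasis_Ico_lowerLimitTopology :
    IsTopologicalBasis (t := lowerLimitTopology α) {I | ∃ a b : α, I = Ico a b} := by
  let := lowerLimitTopology α
  refine ⟨?_, ?_, rfl⟩
  · rintro _ ⟨a, b, rfl⟩ _ ⟨c, d, rfl⟩ x hx
    exact ⟨_, ⟨a ⊔ c, b ⊓ d, Ico_inter_Ico⟩, hx, Subset.rfl⟩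
  · refine sUnion_eq_univ_iff.2 fun x ↦ ?_
    obtain ⟨b, hxb⟩ := exists_gt x
    exact ⟨Ico x b, ⟨x, b, rfl⟩, left_mem_Ico.2 hxb⟩

theorem isOpen_lowerLimitTopology_iff {U : Set α} :
    IsOpen[lowerLimitTopology α] U ↔ ∀ x ∈ U, ∃ b > x, Ico x b ⊆ U := by
  let := lowerLimitTopology α
  rw [isTopologicalBasis_Ico_lowerLimitTopology.isOpen_iff]
  refine forall₂_congr fun x _ ↦ ⟨?_, ?_⟩
  · rintro ⟨_, ⟨a, b, rfl⟩, hx, hsub⟩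
    exact ⟨b, hx.2, (Ico_subset_Ico_left hx.1).trans hsub⟩
  · rintro ⟨b, hxb, hsub⟩
    exact ⟨Ico x b, ⟨x, b, rfl⟩, left_mem_Ico.2 hxb, hsub⟩

theorem lowerLimitTopology_le [t : TopologicalSpace α] [OrderTopology α] :
    lowerLimitTopology α ≤ t := fun _ hU ↦
  isOpen_lowerLimitTopology_iff.2 fun x hx ↦
    exists_Ico_subset_of_mem_nhds (hU.mem_nhds hx) (exists_gt x)

theorem nonempty_interior_of_isOpen_lowerLimitTopology [TopologicalSpace α]
    [OrderClosedTopology α] [DenselyOrdered α] {U : Set α}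
    (hU : IsOpen[lowerLimitTopology α] U) (hne : U.Nonempty) : (interior U).Nonempty := by
  obtain ⟨x, hx⟩ := hne
  obtain ⟨b, hxb, hsub⟩ := isOpen_lowerLimitTopology_iff.1 hU x hx
  exact (nonempty_Ioo.2 hxb).mono
    (interior_maximal (Ioo_subset_Ico_self.trans hsub) isOpen_Ioo)

theorem halfOpenTopology_baireSpace_general [t : TopologicalSpace α] [OrderTopology α]
    [DenselyOrdered α] [BaireSpace α] : @BaireSpace α (lowerLimitTopology α) := by
  have hcont : Continuous[lowerLimitTopology α, t] id :=
    continuous_id_iff_le.2 lowerLimitTopology_le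
  refine @baireSpace_of_nonempty_interior_image α α (lowerLimitTopology α) t id _ hcont
    Function.injective_id denseRange_id fun U hU hne ↦ ?_
  rw [image_id]
  exact nonempty_interior_of_isOpen_lowerLimitTopology hU hne

end LowerLimit

/-- **The Sorgenfrey line is a Baire space.** The real line with the half-open
(lower limit) topology is a Baire space. -/
theorem halfOpenTopology_baireSpace : @BaireSpace ℝ halfOpenTopology :=
  halfOpenTopology_baireSpace_general
end

section
/- Every subset U of ℝ that is open in the half-open (lower limit) topology contains a set V that is open in the standard topology of ℝ such that U \ V is at most countable; in particular V is dense in U for the standard topology. -/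
/-!
A half-open neighbourhood of `x` is a right neighbourhood of `x` in the standard sense, and then so
is its interior. Take `V = interior U`: every point of `U \ V` is isolated on the right in `U \ V`,
and in a second-countable order topology a set has only countably many such points.
-/

open Set Filter Topology

section TopologicalSpace

variable {X : Type*} [TopologicalSpace X] {s t : Set X} {x : X}

theorem interior_mem_nhdsWithin_of_isOpen (ht : IsOpen t) (hs : s ∈ 𝓝[t] x) :
    interior s ∈ 𝓝[t] x := by
  obtain ⟨u, hu, hxu, hus⟩ := mem_nhdsWithin.1 hs
  exact mem_nhdsWithin.2 ⟨u, hu, hxu, interior_maximal hus (hu.inter ht)⟩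

theorem mem_closure_of_mem_nhdsWithin [(𝓝[t] x).NeBot] (hs : s ∈ 𝓝[t] x) : x ∈ closure s :=
  mem_closure_iff_nhdsWithin_neBot.2 (NeBot.mono ‹_› (nhdsWithin_le_of_mem hs))

end TopologicalSpace

section LinearOrder

variable {α : Type*} [LinearOrder α] [TopologicalSpace α]

theorem nhdsGE_le_nhds_generateFrom_Ico [ClosedIciTopology α] (x : α) :
    𝓝[≥] x ≤ @nhds α (.generateFrom {I | ∃ a b, I = Ico a b}) x := by
  rw [TopologicalSpace.nhds_generateFrom]
  refine le_iInf₂ ?_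
  rintro _ ⟨hx, a, b, rfl⟩
  exact le_principal_iff.2 (mem_of_superset (Ico_mem_nhdsGE hx.2) (Ico_subset_Ico_left hx.1))

theorem mem_nhdsGT_of_isOpen_generateFrom_Ico [ClosedIciTopology α] {U : Set α}
    (hU : IsOpen[.generateFrom {I | ∃ a b, I = Ico a b}] U) {x : α} (hx : x ∈ U) :
    U ∈ 𝓝[>] x :=
  nhdsWithin_mono x Ioi_subset_Ici_self
    (nhdsGE_le_nhds_generateFrom_Ico x (@IsOpen.mem_nhds α (_) x U hU hx))

variable [OrderTopology α] [SecondCountableTopology α]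

theorem countable_diff_interior_of_forall_mem_nhdsGT {U : Set α}
    (hU : ∀ x ∈ U, U ∈ 𝓝[>] x) : (U \ interior U).Countable := by
  have hisolated : ∀ x ∈ U \ interior U, 𝓝[(U \ interior U) ∩ Ioi x] x = ⊥ := by
    intro x hx
    have hint : interior U ∈ 𝓝[>] x := interior_mem_nhdsWithin_of_isOpen isOpen_Ioi (hU x hx.1)
    rw [inter_comm, nhdsWithin_inter', inf_principal_eq_bot]
    exact mem_of_superset hint fun _ hy hy' ↦ hy'.2 hy
  exact countable_setOfPred_isolated_right_within.mono fun x hx ↦ mem_sep hx (hisolated x hx)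

theorem halfOpen_open_contains_standard_open_general [DenselyOrdered α] [NoMaxOrder α]
    {U : Set α} (hU : IsOpen[.generateFrom {I | ∃ a b, I = Ico a b}] U) :
    ∃ V : Set α, IsOpen V ∧ V ⊆ U ∧ (U \ V).Countable ∧ U ⊆ closure V := by
  have hright : ∀ x ∈ U, U ∈ 𝓝[>] x := fun _ ↦ mem_nhdsGT_of_isOpen_generateFrom_Ico hU
  refine ⟨interior U, isOpen_interior, interior_subset,
    countable_diff_interior_of_forall_mem_nhdsGT hright, fun x hx ↦ ?_⟩
  exact mem_closure_of_mem_nhdsWithin (interior_mem_nhdsWithin_of_isOpen isOpen_Ioi (hright x hx))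

end LinearOrder

/-- Every set `U ⊆ ℝ` open for the half-open (lower limit) topology contains a set `V`
open for the standard topology with `U \ V` at most countable; in particular `V` is dense
in `U` for the standard topology. -/
theorem halfOpen_open_contains_standard_open (U : Set ℝ) (hU : @IsOpen ℝ halfOpenTopology U) :
    ∃ V : Set ℝ, IsOpen V ∧ V ⊆ U ∧ (U \ V).Countable ∧ U ⊆ closure V :=
  halfOpen_open_contains_standard_open_general hU
end

section
/- Let E ⊆ ℝ≥0 be closed under addition (s, t ∈ E implies s + t ∈ E) and suppose E is comeagre in ℝ≥0 with its standard topology (i.e., the complement of E in ℝ≥0 is meagre). Then E contains every positive real number. -/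
/-!
For open sets `U`, `V` in a Baire topological group and `g ∈ U * V`, the open set
`{y ∈ V | g / y ∈ U}` is nonempty, hence not meagre. If `A` is comeagre in `U` and `B` is comeagre
in `V`, then `g / y ∈ A` and `y ∈ B` for some such `y`, so `g ∈ A * B`. For the positive elements
`P` of a densely ordered group and `E` comeagre in `P`, this gives `P ⊆ P + P ⊆ E + E ⊆ E`.
-/

open Set
open scoped Pointwise

@[to_additive]
theorem mul_subset_mul_of_isMeagre_diff {G : Type*} [Group G] [TopologicalSpace G]
    [IsTopologicalGroup G] [BaireSpace G] {U V A B : Set G} (hU : IsOpen U) (hV : IsOpen V)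
    (hUA : IsMeagre (U \ A)) (hVB : IsMeagre (V \ B)) : U * V ⊆ A * B := by
  rintro _ ⟨u, hu, v, hv, rfl⟩
  let φ : G ≃ₜ G := Homeomorph.divLeft (u * v)
  have isOpen_inter : IsOpen (φ ⁻¹' U ∩ V) := (hU.preimage φ.continuous).inter hV
  have v_mem : v ∈ φ ⁻¹' U ∩ V := ⟨by simpa [φ] using hu, hv⟩
  have isMeagre_bad : IsMeagre (φ ⁻¹' (U \ A) ∪ V \ B) :=
    (hUA.preimage_of_isOpenMap φ.continuous φ.isOpenMap).union hVB
  obtain ⟨y, ⟨hyU, hyV⟩, hy⟩ : ∃ y ∈ φ ⁻¹' U ∩ V, y ∉ φ ⁻¹' (U \ A) ∪ V \ B :=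
    not_subset.mp fun h ↦ not_isMeagre_of_isOpen isOpen_inter ⟨v, v_mem⟩ (isMeagre_bad.mono h)
  have hyA : φ y ∈ A := by_contra fun h ↦ hy (.inl ⟨hyU, h⟩)
  have hyB : y ∈ B := by_contra fun h ↦ hy (.inr ⟨hyV, h⟩)
  exact ⟨φ y, hyA, y, hyB, div_mul_cancel (u * v) y⟩

section OrderedGroup

variable {G : Type*} [AddCommGroup G] [LinearOrder G] [IsOrderedAddMonoid G] [DenselyOrdered G]

theorem Ioi_zero_subset_Ioi_zero_add_Ioi_zero : Ioi (0 : G) ⊆ Ioi 0 + Ioi 0 := by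
  intro r hr
  obtain ⟨x, hx, hxr⟩ := exists_between (mem_Ioi.mp hr)
  exact ⟨x, hx, r - x, sub_pos.mpr hxr, add_sub_cancel x r⟩

theorem comeagre_subsemigroup_eq_pos_general [TopologicalSpace G] [IsTopologicalAddGroup G]
    [OrderClosedTopology G] [BaireSpace G] {E : Set G} (hadd : ∀ s ∈ E, ∀ t ∈ E, s + t ∈ E)
    (hmeagre : IsMeagre (Ioi 0 \ E)) : Ioi 0 ⊆ E :=
  calc
    Ioi 0 ⊆ Ioi 0 + Ioi 0 := Ioi_zero_subset_Ioi_zero_add_Ioi_zero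
    _ ⊆ E + E := add_subset_add_of_isMeagre_diff isOpen_Ioi isOpen_Ioi hmeagre hmeagre
    _ ⊆ E := add_subset_iff.mpr hadd

end OrderedGroup

/-- **A comeagre sub-semigroup of `ℝ≥0` contains all positive reals.** If `E ⊆ [0,∞)` is
closed under addition and its complement in `[0,∞)` is meagre (for the standard topology),
then `E` contains every positive real number. -/
theorem comeagre_subsemigroup_eq_pos (E : Set ℝ) (hE0 : E ⊆ Set.Ici 0)
    (hadd : ∀ s ∈ E, ∀ t ∈ E, s + t ∈ E)
    (hmeagre : IsMeagre (Set.Ici 0 \ E)) :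
    ∀ r : ℝ, 0 < r → r ∈ E := by
  have hpos : IsMeagre (Ioi 0 \ E) := hmeagre.mono (sdiff_subset_sdiff_left Ioi_subset_Ici_self)
  exact fun _ hr ↦ comeagre_subsemigroup_eq_pos_general hadd hpos hr
end

section
/- Let r be an irrational real number. Then the function x ↦ e^{irx}, as an element of L^∞(ℝ; ℂ), does not belong to the closed linear span (in the L^∞ norm) of the set of functions {x ↦ e^{iqx} : q ∈ ℚ}. -/
open MeasureTheory Complex

/-!
The Fourier–Bohr mean at frequency `r` over `[0, T]`, i.e. the average of `f x * e^{-irx}`, is a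
linear functional of norm at most one on `L^∞(ℝ; ℂ)`, whatever `T` is. As `T → ∞` it tends to `0` on
every exponential of frequency other than `r`. By linearity and the uniform bound this persists on
the closed span of these exponentials, whereas the mean of `e^{irx}` itself is constantly `1`.
-/

open Filter Topology
open scoped ENNReal NNReal

theorem tendsto_zero_of_mem_closure_span {ι 𝕜 E F : Type*} [NontriviallyNormedField 𝕜]
    [SeminormedAddCommGroup E] [NormedSpace 𝕜 E] [SeminormedAddCommGroup F] [NormedSpace 𝕜 F]
    {l : Filter ι} {Φ : ι → E →L[𝕜] F} {C : ℝ≥0} (hΦ : ∀ i, ‖Φ i‖₊ ≤ C) {s : Set E}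
    (hs : ∀ x ∈ s, Tendsto (fun i ↦ Φ i x) l (𝓝 0)) {x : E}
    (hx : x ∈ closure (Submodule.span 𝕜 s : Set E)) : Tendsto (fun i ↦ Φ i x) l (𝓝 0) := by
  have equicontinuous : Equicontinuous fun i ↦ (Φ i : E → F) :=
    (LipschitzWith.uniformEquicontinuous _ C
      fun i ↦ (Φ i).lipschitz.weaken (hΦ i)).equicontinuous
  have isClosed : IsClosed {y | Tendsto (fun i ↦ Φ i y) l (𝓝 0)} :=
    equicontinuous.isClosed_setOfPred_tendsto continuous_const
  refine closure_minimal (fun y hy ↦ ?_) isClosed hx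
  induction hy using Submodule.span_induction with
  | mem y hy => exact hs y hy
  | zero => simpa using tendsto_const_nhds
  | add y z _ _ hy hz => simpa using hy.add hz
  | smul c y _ hy => simpa using hy.const_smul c

theorem ae_norm_coeFn_Lp_top_le_norm {α E : Type*} [MeasurableSpace α] {μ : Measure α}
    [NormedAddCommGroup E] (f : Lp E ∞ μ) : ∀ᵐ x ∂μ, ‖f x‖ ≤ ‖f‖ := by
  filter_upwards [ae_le_eLpNormEssSup (f := f) (μ := μ)] with x hx
  rw [Lp.norm_def, eLpNorm_exponent_top, ← toReal_enorm]
  exact ENNReal.toReal_mono (eLpNorm_exponent_top (f := f) ▸ Lp.eLpNorm_ne_top f) hx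

theorem intervalIntegrable_coeFn_Lp {E : Type*} [NormedAddCommGroup E] {μ : Measure ℝ}
    [IsLocallyFiniteMeasure μ] {p : ℝ≥0∞} (hp : 1 ≤ p) (f : Lp E p μ) (a b : ℝ) :
    IntervalIntegrable f μ a b :=
  (((Lp.memLp f).locallyIntegrable hp).integrableOn_isCompact isCompact_uIcc).intervalIntegrable

theorem norm_intervalAverage_le_of_norm_le_const_ae {E : Type*} [NormedAddCommGroup E]
    [NormedSpace ℝ E] {f : ℝ → E} {a b C : ℝ} (hC : 0 ≤ C) (hf : ∀ᵐ x, ‖f x‖ ≤ C) :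
    ‖⨍ x in a..b, f x‖ ≤ C := by
  have integral_le : ‖∫ x in a..b, f x‖ ≤ C * |b - a| :=
    intervalIntegral.norm_integral_le_of_norm_le_const_ae (hf.mono fun _ hx _ ↦ hx)
  rw [interval_average_eq, norm_smul, norm_inv, Real.norm_eq_abs, ← div_eq_inv_mul]
  exact div_le_of_le_mul₀ (abs_nonneg _) hC integral_le

theorem norm_exp_I_mul_ofReal_mul_ofReal (r x : ℝ) : ‖exp (I * r * x)‖ = 1 := by
  simpa [mul_assoc] using norm_exp_I_mul_ofReal (r * x)

theorem tendsto_intervalAverage_exp_zero {r : ℝ} (hr : r ≠ 0) :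
    Tendsto (fun T : ℝ ↦ ⨍ x in (0 : ℝ)..T, exp (I * r * x)) atTop (𝓝 0) := by
  have hIr : I * (r : ℂ) ≠ 0 := mul_ne_zero I_ne_zero (ofReal_ne_zero.mpr hr)
  have integral_le (T : ℝ) : ‖∫ x in (0 : ℝ)..T, exp (I * r * x)‖ ≤ 2 / ‖I * (r : ℂ)‖ := by
    rw [integral_exp_mul_complex hIr, norm_div]
    gcongr
    calc ‖exp (I * r * T) - exp (I * r * (0 : ℝ))‖
        ≤ ‖exp (I * r * T)‖ + ‖exp (I * r * (0 : ℝ))‖ := norm_sub_le _ _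
      _ = 2 := by simp only [norm_exp_I_mul_ofReal_mul_ofReal]; norm_num
  simp only [interval_average_eq, sub_zero]
  exact tendsto_inv_atTop_zero.zero_smul_isBoundedUnder_le
    (isBoundedUnder_of ⟨_, integral_le⟩)

theorem intervalIntegrable_coeFn_Lp_mul_exp {μ : Measure ℝ} [IsLocallyFiniteMeasure μ]
    {p : ℝ≥0∞} (hp : 1 ≤ p) (r : ℝ) (f : Lp ℂ p μ) (a b : ℝ) :
    IntervalIntegrable (fun x ↦ f x * exp (-(I * r * x))) μ a b :=
  (intervalIntegrable_coeFn_Lp hp f a b).mul_continuousOn (by fun_prop)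

/-- The Fourier–Bohr mean `T⁻¹ ∫₀ᵀ f x * e^{-irx} dx` of `f ∈ L^∞(ℝ; ℂ)` at frequency `r`, as a
continuous linear functional (zero for `T = 0`). Its limit as `T → ∞`, if it exists, is the
Fourier–Bohr coefficient of `f`. -/
noncomputable def fourierBohrMean (r T : ℝ) : Lp ℂ ∞ (volume : Measure ℝ) →L[ℂ] ℂ :=
  LinearMap.mkContinuous
    { toFun f := ⨍ x in (0 : ℝ)..T, f x * exp (-(I * r * x))
      map_add' f g := by
        have add_mul_ae : (fun x ↦ (f + g) x * exp (-(I * r * x))) =ᵐ[volume]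
            fun x ↦ f x * exp (-(I * r * x)) + g x * exp (-(I * r * x)) := by
          filter_upwards [Lp.coeFn_add f g] with x hx
          rw [hx, Pi.add_apply, add_mul]
        rw [average_congr (ae_restrict_of_ae add_mul_ae)]
        simp only [interval_average_eq]
        rw [intervalIntegral.integral_add (intervalIntegrable_coeFn_Lp_mul_exp le_top r f _ _)
          (intervalIntegrable_coeFn_Lp_mul_exp le_top r g _ _), smul_add]
      map_smul' c f := by
        have smul_mul_ae : (fun x ↦ (c • f) x * exp (-(I * r * x))) =ᵐ[volume]
            fun x ↦ c • (f x * exp (-(I * r * x))) := by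
          filter_upwards [Lp.coeFn_smul c f] with x hx
          rw [hx, Pi.smul_apply, smul_mul_assoc]
        rw [average_congr (ae_restrict_of_ae smul_mul_ae)]
        simp only [interval_average_eq, RingHom.id_apply]
        rw [intervalIntegral.integral_smul, smul_comm] }
    1 fun f ↦ by
      rw [one_mul]
      refine norm_intervalAverage_le_of_norm_le_const_ae (norm_nonneg f) ?_
      filter_upwards [ae_norm_coeFn_Lp_top_le_norm f] with x hx
      rwa [norm_mul, exp_neg, norm_inv, norm_exp_I_mul_ofReal_mul_ofReal, inv_one, mul_one]

theorem nnnorm_fourierBohrMean_le_one (r T : ℝ) : ‖fourierBohrMean r T‖₊ ≤ 1 :=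
  LinearMap.mkContinuous_norm_le _ zero_le_one _

theorem fourierBohrMean_apply_of_ae_eq_exp {s : ℝ} {f : Lp ℂ ∞ (volume : Measure ℝ)}
    (hf : f =ᵐ[volume] fun x ↦ exp (I * s * x)) (r T : ℝ) :
    fourierBohrMean r T f = ⨍ x in (0 : ℝ)..T, exp (I * (s - r : ℝ) * x) := by
  refine average_congr (ae_restrict_of_ae ?_)
  filter_upwards [hf] with x hx
  rw [hx, ← exp_add]
  push_cast
  ring_nf

theorem tendsto_fourierBohrMean_zero_of_ae_eq_exp {r s : ℝ} (hrs : s ≠ r)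
    {f : Lp ℂ ∞ (volume : Measure ℝ)} (hf : f =ᵐ[volume] fun x ↦ exp (I * s * x)) :
    Tendsto (fun T ↦ fourierBohrMean r T f) atTop (𝓝 0) := by
  simpa only [fourierBohrMean_apply_of_ae_eq_exp hf] using
    tendsto_intervalAverage_exp_zero (sub_ne_zero.mpr hrs)

theorem fourierBohrMean_eq_one_of_ae_eq_exp {r T : ℝ} (hT : T ≠ 0) {f : Lp ℂ ∞ (volume : Measure ℝ)}
    (hf : f =ᵐ[volume] fun x ↦ exp (I * r * x)) : fourierBohrMean r T f = 1 := by
  simp [fourierBohrMean_apply_of_ae_eq_exp hf, interval_average_eq, hT]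

theorem exp_irrational_not_mem_closure_span_exp_rat_general {S : Set ℝ} {r : ℝ} (hr : r ∉ S)
    {F : Lp ℂ ∞ (volume : Measure ℝ)} (hF : F =ᵐ[volume] fun x ↦ exp (I * r * x)) :
    F ∉ closure (Submodule.span ℂ
      {G : Lp ℂ ∞ (volume : Measure ℝ) |
        ∃ s ∈ S, G =ᵐ[volume] fun x ↦ exp (I * s * x)} : Set (Lp ℂ ∞ (volume : Measure ℝ))) := by
  intro hmem
  have tendsto_zero : Tendsto (fun T ↦ fourierBohrMean r T F) atTop (𝓝 0) := by
    refine tendsto_zero_of_mem_closure_span (nnnorm_fourierBohrMean_le_one r) ?_ hmem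
    rintro G ⟨s, hs, hG⟩
    exact tendsto_fourierBohrMean_zero_of_ae_eq_exp (ne_of_mem_of_not_mem hs hr) hG
  have tendsto_one : Tendsto (fun T ↦ fourierBohrMean r T F) atTop (𝓝 1) :=
    tendsto_const_nhds.congr' <| (eventually_ne_atTop 0).mono fun T hT ↦
      (fourierBohrMean_eq_one_of_ae_eq_exp hT hF).symm
  exact zero_ne_one (tendsto_nhds_unique tendsto_zero tendsto_one)

/-- **`e^{irx}` is not in the closed span of `{e^{iqx} : q ∈ ℚ}` in `L^∞(ℝ)`.**
For irrational `r`, the element of `L^∞(ℝ; ℂ)` represented by `x ↦ e^{irx}` does not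
belong to the closed linear span of the elements represented by `x ↦ e^{iqx}`, `q ∈ ℚ`. -/
theorem exp_irrational_not_mem_closure_span_exp_rat (r : ℝ) (hr : Irrational r) :
    ∀ F : Lp ℂ ⊤ (volume : Measure ℝ),
      (F : ℝ → ℂ) =ᵐ[volume] (fun x : ℝ => Complex.exp (Complex.I * r * x)) →
      F ∉ closure (Submodule.span ℂ
        {G : Lp ℂ ⊤ (volume : Measure ℝ) |
          ∃ q : ℚ, (G : ℝ → ℂ) =ᵐ[volume] fun x : ℝ => Complex.exp (Complex.I * q * x)}
        : Set (Lp ℂ ⊤ (volume : Measure ℝ))) := by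
  intro F hF
  simpa using exp_irrational_not_mem_closure_span_exp_rat_general hr hF
end
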